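/- (Gross–Sullivant) Let G be a simple graph on vertex set {1,…,n}. If G is d-independent, then MLT(G) ≤ d + 1. -/

import Mathlib

open MeasureTheory Matrix

noncomputable section

/-- The objective function `K ↦ tr(S K) − log det K` of Gaussian maximum likelihood,
where `S` is the sample covariance matrix. -/
def mlObjective {n : ℕ} (S K : Matrix (Fin n) (Fin n) ℝ) : ℝ :=
  (S * K).trace - Real.log K.det

/-- The maximum likelihood threshold of a set `M` of positive definite matrices:
the smallest positive integer `d` such that for Lebesgue-almost every real `n × d`
matrix `X`, the function `K ↦ tr(X Xᵀ K) − log det K` attains a minimum on `M`. -/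
def mlt (n : ℕ) (M : Set (Matrix (Fin n) (Fin n) ℝ)) : ℕ :=
  sInf {d : ℕ | 0 < d ∧
    ∀ᵐ X : Fin n → Fin d → ℝ ∂volume,
      ∃ K ∈ M, ∀ K' ∈ M,
        mlObjective (Matrix.of X * (Matrix.of X)ᵀ) K ≤
          mlObjective (Matrix.of X * (Matrix.of X)ᵀ) K'}

/-- The Gaussian graphical model of a graph `G` on `{1,…,n}`: all symmetric positive
definite matrices whose off-diagonal entries vanish at non-edges of `G`. -/
def graphModel (n : ℕ) (G : SimpleGraph (Fin n)) : Set (Matrix (Fin n) (Fin n) ℝ) :=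
  {K | K.PosDef ∧ ∀ i j, i ≠ j → ¬ G.Adj i j → K i j = 0}

/-- The rigidity vector `R_{ij}(p)`: the block vector in `(ℝ^d)^n` whose `i`-th block is
`p i − p j`, whose `j`-th block is `p j − p i`, and whose other blocks are zero. -/
def rigidityVec {n d : ℕ} (p : Fin n → Fin d → ℝ) (i j : Fin n) : Fin n → Fin d → ℝ :=
  fun k => if k = i then p i - p j else if k = j then p j - p i else 0

/-- A graph `G` is `d`-independent if for Lebesgue-almost every `p : {1,…,n} → ℝ^d`,
the rigidity vectors `{R_{ij}(p) : ij ∈ E(G)}` are linearly independent. -/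
def IsIndepGraph {n : ℕ} (d : ℕ) (G : SimpleGraph (Fin n)) : Prop :=
  ∀ᵐ p : Fin n → Fin d → ℝ ∂volume,
    LinearIndependent ℝ (fun e : {e : Fin n × Fin n // G.Adj e.1 e.2 ∧ e.1 < e.2} =>
      rigidityVec p e.1.1 e.1.2)

/-!
If `K` is positive semidefinite and `tr (X Xᵀ K) = 0`, then `K X = 0`. Scale the rows of `X` so
that their first coordinates become `1`, which leaves points `p i ∈ ℝ^d`; the off-diagonal entries
of `K`, rescaled accordingly, are then an equilibrium stress of the framework `(G, p)`. For a
`d`-independent graph and almost every `X` this stress vanishes, hence `K = 0`. So `tr (X Xᵀ K)` is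
positive on the nonzero positive semidefinite matrices supported on `G`; by compactness it dominates
a multiple of `tr K`, whereas `log det K` grows only logarithmically in `tr K`. Sublevel sets of the
objective therefore lie in compact subsets of the model, and a minimum exists.
-/

section Dehomogenization

variable {V : Type*} {d : ℕ}

/-- The affine points obtained from the rows of `X`, read as homogeneous coordinates in which
coordinate `0` is the one to be normalized to `1`. A row with `X i 0 = 0` is sent to the origin. -/
def dehomogenize (X : V → Fin (d + 1) → ℝ) : V → Fin d → ℝ :=
  fun i => (X i 0)⁻¹ • Fin.tail (X i)

variable [Fintype V]

lemma ae_forall_ne_zero : ∀ᵐ c : V → ℝ, ∀ i, c i ≠ 0 :=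
  ae_all_iff.2 fun i =>
    (Measure.quasiMeasurePreserving_eval (fun _ : V => (volume : Measure ℝ)) i).ae
      (Measure.ae_ne volume 0)

lemma ae_forall_apply_zero_ne_zero : ∀ᵐ X : V → Fin (d + 1) → ℝ, ∀ i, X i 0 ≠ 0 :=
  ae_all_iff.2 fun i =>
    ((Measure.quasiMeasurePreserving_eval (fun _ : Fin (d + 1) => (volume : Measure ℝ)) 0).comp
      (Measure.quasiMeasurePreserving_eval
        (fun _ : V => (volume : Measure (Fin (d + 1) → ℝ))) i)).ae (Measure.ae_ne volume 0)

lemma quasiMeasurePreserving_pi_smul {E : Type*} [NormedAddCommGroup E] [NormedSpace ℝ E]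
    [FiniteDimensional ℝ E] [MeasureSpace E] [BorelSpace E]
    [(volume : Measure E).IsAddHaarMeasure] {c : V → ℝ} (hc : ∀ i, c i ≠ 0) :
    Measure.QuasiMeasurePreserving (fun (y : V → E) i => c i • y i) :=
  let f : (V → E) ≃ₗ[ℝ] (V → E) :=
    LinearEquiv.piCongrRight fun i => LinearEquiv.smulOfNeZero ℝ E (c i) (hc i)
  Measure.LinearMap.quasiMeasurePreserving volume (f : (V → E) →ₗ[ℝ] (V → E)) f.isUnit_det'.ne_zero

lemma quasiMeasurePreserving_inv_smul {E : Type*} [NormedAddCommGroup E] [NormedSpace ℝ E]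
    [FiniteDimensional ℝ E] [MeasureSpace E] [BorelSpace E]
    [(volume : Measure E).IsAddHaarMeasure] :
    Measure.QuasiMeasurePreserving (fun (z : (V → ℝ) × (V → E)) i => (z.1 i)⁻¹ • z.2 i) := by
  refine QuasiMeasurePreserving.prod_of_right (by fun_prop) ?_
  filter_upwards [ae_forall_ne_zero] with c hc
  exact quasiMeasurePreserving_pi_smul fun i => inv_ne_zero (hc i)

lemma quasiMeasurePreserving_dehomogenize :
    Measure.QuasiMeasurePreserving (dehomogenize : (V → Fin (d + 1) → ℝ) → V → Fin d → ℝ) := by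
  have hsplit := volume_preserving_pi fun _ : V =>
    volume_preserving_piFinSuccAbove (fun _ : Fin (d + 1) => ℝ) 0
  have hcurry := volume_measurePreserving_arrowProdEquivProdArrow ℝ (Fin d → ℝ) V
  exact quasiMeasurePreserving_inv_smul.comp (hcurry.comp hsplit).quasiMeasurePreserving

end Dehomogenization

section Stress

/-- The real matrices indexed by the vertices of `G` whose off-diagonal entries vanish at the
non-edges of `G`. -/
def graphSubspace {V : Type*} (G : SimpleGraph V) : Submodule ℝ (Matrix V V ℝ) where
  carrier := {K | ∀ i j, i ≠ j → ¬ G.Adj i j → K i j = 0}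
  add_mem' hK hL i j hij hG := by simp [hK i j hij hG, hL i j hij hG]
  zero_mem' _ _ _ _ := rfl
  smul_mem' c K hK i j hij hG := by simp [hK i j hij hG]

/-- `ω` is an equilibrium stress of the framework `(G, p)`: symmetric weights on the edges of `G`
for which the forces `ω i j • (p i - p j)` balance at every vertex. The diagonal of `ω` is
arbitrary, as it exerts no force. -/
structure IsEquilibriumStress {V E : Type*} [Fintype V] [AddCommGroup E] [Module ℝ E]
    (G : SimpleGraph V) (p : V → E) (ω : Matrix V V ℝ) : Prop where
  isSymm : ω.IsSymm
  mem_graphSubspace : ω ∈ graphSubspace G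
  sum_smul_sub : ∀ i, ∑ j, ω i j • (p i - p j) = 0

lemma sum_edges_eq_sum_Ioi {V M : Type*} [Fintype V] [LinearOrder V] [LocallyFiniteOrderTop V]
    [AddCommMonoid M] (G : SimpleGraph V) [Fintype {e : V × V // G.Adj e.1 e.2 ∧ e.1 < e.2}]
    {f : V → V → M} (hf : ∀ i j, i ≠ j → ¬ G.Adj i j → f i j = 0) :
    ∑ e : {e : V × V // G.Adj e.1 e.2 ∧ e.1 < e.2}, f e.1.1 e.1.2 =
      ∑ i, ∑ j ∈ Finset.Ioi i, f i j := by
  classical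
  rw [← Finset.sum_subtype (Finset.univ.filter fun e : V × V => G.Adj e.1 e.2 ∧ e.1 < e.2) (by simp)
    fun e => f e.1 e.2, Finset.sum_filter, Fintype.sum_prod_type]
  refine Finset.sum_congr rfl fun i _ => ?_
  rw [← Finset.sum_filter]
  refine Finset.sum_subset_zero_on_sdiff (fun j hj => by simp_all) (fun j hj => ?_) fun _ _ => rfl
  simp only [Finset.mem_sdiff, Finset.mem_Ioi, Finset.mem_filter_univ] at hj
  exact hf i j hj.1.ne fun hG => hj.2 ⟨hG, hj.1⟩

variable {n d : ℕ} {G : SimpleGraph (Fin n)} {p : Fin n → Fin d → ℝ}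
  {K ω : Matrix (Fin n) (Fin n) ℝ}

lemma rigidityVec_eq_single_add_single (p : Fin n → Fin d → ℝ) (i j : Fin n) :
    rigidityVec p i j = Pi.single i (p i - p j) + Pi.single j (p j - p i) := by
  ext1 k
  by_cases hi : k = i <;> by_cases hj : k = j <;> simp_all [rigidityVec]

lemma sum_edges_smul_rigidityVec [Fintype {e : Fin n × Fin n // G.Adj e.1 e.2 ∧ e.1 < e.2}]
    (p : Fin n → Fin d → ℝ) (hω : ω.IsSymm) (hωG : ω ∈ graphSubspace G) :
    ∑ e : {e : Fin n × Fin n // G.Adj e.1 e.2 ∧ e.1 < e.2},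
      ω e.1.1 e.1.2 • rigidityVec p e.1.1 e.1.2 = fun i => ∑ j, ω i j • (p i - p j) := by
  let F (j i : Fin n) : Fin n → Fin d → ℝ := Pi.single i (ω i j • (p i - p j))
  have hF (i j : Fin n) : ω i j • rigidityVec p i j = F j i + F i j := by
    simp only [F, hω.apply i j, rigidityVec_eq_single_add_single, smul_add, Pi.single_smul]
  have hdiag (i : Fin n) : F i i = 0 := by simp [F]
  calc
    _ = ∑ i, ∑ j ∈ Finset.Ioi i, ω i j • rigidityVec p i j :=
      sum_edges_eq_sum_Ioi G fun i j hij hG => by rw [hωG i j hij hG, zero_smul]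
    _ = ∑ i, ∑ j ∈ {i}ᶜ, F j i := by
      simp only [hF, Finset.sum_sum_Ioi_add_eq_sum_sum_off_diag]
    _ = ∑ i, ∑ j, F j i :=
      Finset.sum_congr rfl fun i _ => by rw [Fintype.sum_eq_add_sum_compl i, hdiag, zero_add]
    _ = ∑ i, Pi.single i (∑ j, ω i j • (p i - p j)) :=
      Finset.sum_congr rfl fun i _ =>
        (map_sum (AddMonoidHom.single (fun _ => Fin d → ℝ) i) _ _).symm
    _ = fun i => ∑ j, ω i j • (p i - p j) := Finset.univ_sum_single _

lemma IsEquilibriumStress.apply_eq_zero (hω : IsEquilibriumStress G p ω)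
    (hp : LinearIndependent ℝ fun e : {e : Fin n × Fin n // G.Adj e.1 e.2 ∧ e.1 < e.2} =>
      rigidityVec p e.1.1 e.1.2) {i j : Fin n} (hij : i ≠ j) : ω i j = 0 := by
  classical
  have hsum : ∑ e : {e : Fin n × Fin n // G.Adj e.1 e.2 ∧ e.1 < e.2},
      ω e.1.1 e.1.2 • rigidityVec p e.1.1 e.1.2 = 0 :=
    (sum_edges_smul_rigidityVec p hω.isSymm hω.mem_graphSubspace).trans (funext hω.sum_smul_sub)
  have hedge := Fintype.linearIndependent_iff.1 hp (fun e => ω e.1.1 e.1.2) hsum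
  by_cases hG : G.Adj i j
  · rcases hij.lt_or_gt with hlt | hgt
    · exact hedge ⟨(i, j), hG, hlt⟩
    · exact (hω.isSymm.apply j i).trans (hedge ⟨(j, i), hG.symm, hgt⟩)
  · exact hω.mem_graphSubspace i j hij hG

lemma isEquilibriumStress_of_mul_eq_zero {V : Type*} [Fintype V] {G : SimpleGraph V}
    {K : Matrix V V ℝ} {X : V → Fin (d + 1) → ℝ} (hX : ∀ i, X i 0 ≠ 0) (hK : K.IsSymm)
    (hKG : K ∈ graphSubspace G) (hKX : K * of X = 0) :
    IsEquilibriumStress G (dehomogenize X) (of fun i j => X i 0 * K i j * X j 0) := by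
  have hsum (i : V) (k : Fin (d + 1)) : ∑ j, K i j * X j k = 0 := congrFun₂ hKX i k
  refine ⟨IsSymm.ext fun i j => ?_, fun i j hij hG => ?_, fun i => funext fun k => ?_⟩
  · simp only [of_apply, hK.apply i j]
    ring
  · simp [hKG i j hij hG]
  · have hterm (j : V) : X i 0 * K i j * X j 0 * (dehomogenize X i k - dehomogenize X j k) =
        X i k.succ * (K i j * X j 0) - X i 0 * (K i j * X j k.succ) := by
      have := hX i
      have := hX j
      simp only [dehomogenize, Fin.tail, Pi.smul_apply, smul_eq_mul]
      field_simp
    simp only [of_apply, Finset.sum_apply, Pi.smul_apply, Pi.sub_apply, smul_eq_mul, hterm,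
      Finset.sum_sub_distrib, ← Finset.mul_sum, hsum, mul_zero, sub_zero, Pi.zero_apply]

lemma eq_zero_of_mul_eq_zero_of_linearIndependent {X : Fin n → Fin (d + 1) → ℝ}
    (hX : ∀ i, X i 0 ≠ 0)
    (hp : LinearIndependent ℝ fun e : {e : Fin n × Fin n // G.Adj e.1 e.2 ∧ e.1 < e.2} =>
      rigidityVec (dehomogenize X) e.1.1 e.1.2)
    (hK : K.IsSymm) (hKG : K ∈ graphSubspace G) (hKX : K * of X = 0) : K = 0 := by
  have hoff (i j : Fin n) (hij : i ≠ j) : K i j = 0 := by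
    simpa [hX] using (isEquilibriumStress_of_mul_eq_zero hX hK hKG hKX).apply_eq_zero hp hij
  have hdiag (i : Fin n) : K i i = 0 := by
    have hsum : ∑ j, K i j * X j 0 = 0 := congrFun₂ hKX i 0
    rw [Fintype.sum_eq_single i fun j hj => by rw [hoff i j hj.symm, zero_mul]] at hsum
    exact (mul_eq_zero.1 hsum).resolve_right (hX i)
  ext i j
  obtain rfl | hij := eq_or_ne i j
  · exact hdiag i
  · exact hoff i j hij

end Stress

section PosSemidef

variable {ι m : Type*} [Fintype ι] {K : Matrix ι ι ℝ}

lemma trace_mul_transpose_mul_nonneg [Fintype m] (hK : K.PosSemidef) (X : Matrix ι m ℝ) :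
    0 ≤ (X * Xᵀ * K).trace := by
  rw [Matrix.mul_assoc, trace_mul_comm]
  exact (hK.conjTranspose_mul_mul_same X).trace_nonneg

lemma mul_eq_zero_of_trace_mul_transpose_mul_eq_zero [Fintype m] (hK : K.PosSemidef)
    {X : Matrix ι m ℝ} (h : (X * Xᵀ * K).trace = 0) : K * X = 0 := by
  have hzero : Xᴴ * K * X = 0 := by
    rwa [Matrix.mul_assoc, trace_mul_comm, ← conjTranspose_eq_transpose_of_trivial,
      (hK.conjTranspose_mul_mul_same X).trace_eq_zero_iff] at h
  ext i k
  have hcol : star (X.col k) ⬝ᵥ K *ᵥ X.col k = 0 := by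
    rw [dotProduct_mulVec]
    exact congrFun₂ hzero k k
  exact congrFun ((hK.dotProduct_mulVec_zero_iff _).1 hcol) i

lemma abs_apply_le_trace (hK : K.PosSemidef) (i j : ι) : |K i j| ≤ K.trace := by
  classical
  have hdiag (i : ι) : K i i ≤ K.trace :=
    Finset.single_le_sum (f := fun i => K i i) (fun i _ => hK.diag_nonneg) (Finset.mem_univ i)
  have hsymm : K j i = K i j := hK.isHermitian.apply i j
  have hadd : 0 ≤ K i i + K j j + 2 * K i j := by
    have := hK.dotProduct_mulVec_nonneg (Pi.single i 1 + Pi.single j 1)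
    simp only [star_trivial, mulVec_add, mulVec_single, MulOpposite.op_one, one_smul,
      dotProduct_add, add_dotProduct, single_dotProduct, col_apply, one_mul, hsymm] at this
    linarith
  have hsub : 0 ≤ K i i + K j j - 2 * K i j := by
    have := hK.dotProduct_mulVec_nonneg (Pi.single i 1 - Pi.single j 1)
    simp only [star_trivial, mulVec_sub, mulVec_single, MulOpposite.op_one, one_smul,
      dotProduct_sub, sub_dotProduct, single_dotProduct, col_apply, one_mul, hsymm] at this
    linarith
  exact abs_le.2 ⟨by linarith [hdiag i, hdiag j], by linarith [hdiag i, hdiag j]⟩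

lemma isClosed_setOf_posSemidef {ι : Type*} [Finite ι] :
    IsClosed {K : Matrix ι ι ℝ | K.PosSemidef} := by
  have := Fintype.ofFinite ι
  simp only [posSemidef_iff_dotProduct_mulVec, Set.ofPred_and, Set.ofPred_forall]
  exact (isClosed_eq (by fun_prop) (by fun_prop)).inter
    (isClosed_iInter fun x => isClosed_le (by fun_prop) (by fun_prop))

lemma isCompact_setOf_posSemidef_trace_le (T : ℝ) :
    IsCompact {K : Matrix ι ι ℝ | K.PosSemidef ∧ K.trace ≤ T} := by
  have hbox : IsCompact (Set.univ.pi fun _ => Set.univ.pi fun _ => Set.Icc (-T) T :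
      Set (Matrix ι ι ℝ)) :=
    isCompact_univ_pi fun _ => isCompact_univ_pi fun _ => isCompact_Icc
  have htrace : IsClosed {K : Matrix ι ι ℝ | K.trace ≤ T} :=
    isClosed_le (by fun_prop) (by fun_prop)
  refine hbox.of_isClosed_subset (isClosed_setOf_posSemidef.inter htrace) ?_
  rintro K ⟨hK, hT⟩ i - j -
  exact abs_le.1 ((abs_apply_le_trace hK i j).trans hT)

lemma log_det_le_trace_sub_card [DecidableEq ι] (hK : K.PosDef) :
    Real.log K.det ≤ K.trace - Fintype.card ι := by
  rw [hK.isHermitian.det_eq_prod_eigenvalues, hK.isHermitian.trace_eq_sum_eigenvalues]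
  simp only [RCLike.ofReal_real_eq_id, id]
  rw [Real.log_prod fun i _ => (hK.eigenvalues_pos i).ne']
  calc
    _ ≤ ∑ i, (hK.isHermitian.eigenvalues i - 1) :=
      Finset.sum_le_sum fun i _ => Real.log_le_sub_one_of_pos (hK.eigenvalues_pos i)
    _ = _ := by simp

lemma log_det_le_mul_trace_sub [DecidableEq ι] (hK : K.PosDef) {a : ℝ} (ha : 0 < a) :
    Real.log K.det ≤ a * K.trace - Fintype.card ι * (1 + Real.log a) := by
  have h := log_det_le_trace_sub_card (hK.smul ha)
  rw [det_smul, trace_smul, smul_eq_mul, Real.log_mul (pow_pos ha _).ne' hK.det_pos.ne',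
    Real.log_pow] at h
  linarith

lemma exists_pos_mul_trace_le_trace_mul {L : Submodule ℝ (Matrix ι ι ℝ)} {S : Matrix ι ι ℝ}
    (hS : ∀ K ∈ L, K.PosSemidef → K ≠ 0 → 0 < (S * K).trace) :
    ∃ ε > 0, ∀ K ∈ L, K.PosSemidef → ε * K.trace ≤ (S * K).trace := by
  have hcompact : IsCompact
      ({K : Matrix ι ι ℝ | K.PosSemidef ∧ K.trace ≤ 1} ∩ {K | K ∈ L ∧ K.trace = 1}) :=
    (isCompact_setOf_posSemidef_trace_le 1).inter_right
      (L.closed_of_finiteDimensional.inter (isClosed_eq (by fun_prop) (by fun_prop)))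
  obtain ⟨ε, hε, hεK⟩ := hcompact.exists_forall_le' (f := fun K => (S * K).trace) (a := 0)
    (by fun_prop) fun K ⟨⟨hK, _⟩, hKL, htr⟩ => hS K hKL hK fun h0 => by simp [h0] at htr
  refine ⟨ε, hε, fun K hKL hK => ?_⟩
  obtain h0 | htr := hK.trace_nonneg.eq_or_lt
  · simp [hK.trace_eq_zero_iff.1 h0.symm]
  · have hnormalized : (K.trace⁻¹ • K).trace = 1 := by
      rw [trace_smul, smul_eq_mul, inv_mul_cancel₀ htr.ne']
    have h := hεK (K.trace⁻¹ • K)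
      ⟨⟨hK.smul (inv_nonneg.2 htr.le), hnormalized.le⟩, L.smul_mem _ hKL, hnormalized⟩
    rwa [Matrix.mul_smul, trace_smul, smul_eq_mul, ← div_eq_inv_mul, le_div_iff₀ htr] at h

end PosSemidef

section Existence

variable {n : ℕ} {S : Matrix (Fin n) (Fin n) ℝ}

/-- The linear concentration model of `L`: the positive definite matrices in a linear space `L` of
matrices. -/
def concentrationModel (L : Submodule ℝ (Matrix (Fin n) (Fin n) ℝ)) :
    Set (Matrix (Fin n) (Fin n) ℝ) :=
  {K | K.PosDef ∧ K ∈ L}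

lemma continuousOn_mlObjective (S : Matrix (Fin n) (Fin n) ℝ) :
    ContinuousOn (mlObjective S) {K | K.det ≠ 0} :=
  ContinuousOn.sub (by fun_prop) (ContinuousOn.log (by fun_prop) fun _ hK => hK)

lemma exists_isCompact_subset_concentrationModel {L : Submodule ℝ (Matrix (Fin n) (Fin n) ℝ)}
    (hS : ∀ K ∈ L, K.PosSemidef → K ≠ 0 → 0 < (S * K).trace) (c : ℝ) :
    ∃ C ⊆ concentrationModel L, IsCompact C ∧
      ∀ K ∈ concentrationModel L, mlObjective S K ≤ c → K ∈ C := by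
  obtain ⟨ε, hε, hεS⟩ := exists_pos_mul_trace_le_trace_mul hS
  let T : ℝ := (c - n * (1 + Real.log (ε / 2))) / (ε / 2)
  refine ⟨{K | K.PosSemidef ∧ K.trace ≤ T} ∩ {K | K ∈ L ∧ Real.exp (-c) ≤ K.det}, ?_, ?_, ?_⟩
  · rintro K ⟨⟨hK, -⟩, hKL, hdet⟩
    exact ⟨hK.posDef_iff_det_ne_zero.2 ((Real.exp_pos _).trans_le hdet).ne', hKL⟩
  · have hdet : IsClosed {K : Matrix (Fin n) (Fin n) ℝ | Real.exp (-c) ≤ K.det} :=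
      isClosed_le (by fun_prop) (by fun_prop)
    exact (isCompact_setOf_posSemidef_trace_le T).inter_right
      (L.closed_of_finiteDimensional.inter hdet)
  · rintro K ⟨hK, hKL⟩ hc
    have hεK : ε * K.trace ≤ (S * K).trace := hεS K hKL hK.posSemidef
    rw [mlObjective] at hc
    refine ⟨⟨hK.posSemidef, ?_⟩, hKL, ?_⟩
    · have hlog := log_det_le_mul_trace_sub hK (half_pos hε)
      rw [Fintype.card_fin] at hlog
      rw [le_div_iff₀ (half_pos hε)]
      linarith
    · rw [← Real.le_log_iff_exp_le hK.det_pos]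
      linarith [mul_nonneg hε.le hK.posSemidef.trace_nonneg]

lemma exists_isMinOn_mlObjective {L : Submodule ℝ (Matrix (Fin n) (Fin n) ℝ)}
    (hL : (concentrationModel L).Nonempty)
    (hS : ∀ K ∈ L, K.PosSemidef → K ≠ 0 → 0 < (S * K).trace) :
    ∃ K ∈ concentrationModel L, IsMinOn (mlObjective S) (concentrationModel L) K := by
  obtain ⟨K₁, hK₁⟩ := hL
  obtain ⟨C, hCL, hC, hmem⟩ := exists_isCompact_subset_concentrationModel hS (mlObjective S K₁)
  have hcont : ContinuousOn (mlObjective S) C :=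
    (continuousOn_mlObjective S).mono fun K hK => (hCL hK).1.det_pos.ne'
  have hK₁C : K₁ ∈ C := hmem K₁ hK₁ le_rfl
  obtain ⟨K₀, hK₀, hmin⟩ := hC.exists_isMinOn ⟨K₁, hK₁C⟩ hcont
  refine ⟨K₀, hCL hK₀, fun K hK => ?_⟩
  obtain hle | hgt := le_or_gt (mlObjective S K) (mlObjective S K₁)
  · exact hmin (hmem K hK hle)
  · exact (hmin hK₁C).trans hgt.le

end Existence

lemma graphModel_eq_concentrationModel {n : ℕ} (G : SimpleGraph (Fin n)) :
    graphModel n G = concentrationModel (graphSubspace G) :=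
  rfl

lemma one_mem_graphModel {n : ℕ} (G : SimpleGraph (Fin n)) : 1 ∈ graphModel n G :=
  ⟨PosDef.one, fun _ _ hij _ => one_apply_ne hij⟩

theorem IsIndepGraph.ae_exists_isMinOn_mlObjective {n d : ℕ} {G : SimpleGraph (Fin n)}
    (h : IsIndepGraph d G) :
    ∀ᵐ X : Fin n → Fin (d + 1) → ℝ,
      ∃ K ∈ graphModel n G, IsMinOn (mlObjective (of X * (of X)ᵀ)) (graphModel n G) K := by
  filter_upwards [ae_forall_apply_zero_ne_zero, quasiMeasurePreserving_dehomogenize.ae h]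
    with X hX hindep
  rw [graphModel_eq_concentrationModel]
  refine exists_isMinOn_mlObjective ⟨1, one_mem_graphModel G⟩
    fun K hKG hK hK0 => (trace_mul_transpose_mul_nonneg hK (of X)).lt_of_ne' fun htr => hK0 ?_
  have hKX : K * of X = 0 := mul_eq_zero_of_trace_mul_transpose_mul_eq_zero hK htr
  exact eq_zero_of_mul_eq_zero_of_linearIndependent hX hindep
    (isHermitian_iff_isSymm.1 hK.isHermitian) hKG hKX

/-- Gross–Sullivant: if `G` is `d`-independent, then `MLT(G) ≤ d + 1`. -/
theorem mlt_le_of_indep (n d : ℕ) (G : SimpleGraph (Fin n))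
    (h : IsIndepGraph d G) :
    mlt n (graphModel n G) ≤ d + 1 :=
  Nat.sInf_le ⟨d.succ_pos, h.ae_exists_isMinOn_mlObjective⟩
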